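/- arXiv:2010.01036 — 3 statements merged into one kernel-verified Lean document; each statement's English description precedes it below -/
import Mathlib

section
/- For every s ∈ (0,1) and λ > 0, the function u_{λ,s} is twice differentiable on (0,∞) and solves the Bessel extension equation u_{λ,s}''(y) + ((1−2s)/y) u_{λ,s}'(y) = λ u_{λ,s}(y) for all y > 0. (This is the scalar form of the extension equation (L + 𝓑_a)U = 0 with a = 1 − 2s proved in Lemma 3.1.) -/
open MeasureTheory Set Filter

/-- The scalar `s`-harmonic extension `u_{λ,s}(y)`. -/
noncomputable def uExt (s lam y : ℝ) : ℝ :=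
  (lam ^ s / Real.Gamma s) *
    ∫ t in Set.Ioi (0:ℝ),
      Real.exp (-(t * lam)) * Real.exp (-(y ^ 2 / (4 * t))) * t ^ (s - 1)

/-! The integral is an extended Gamma function
`J s b = ∫ t in (0, ∞), exp (-a t - b / t) t ^ (s - 1)`, taken at `a = λ`, `b = y ^ 2 / 4`.
Differentiating in `b` lowers the exponent, `∂J s / ∂b = -J (s - 1)`, so `u'` and `u''` are
combinations of `J (s - 1)` and `J (s - 2)`. Integrating the `t`-derivative of
`exp (-a t - b / t) t ^ s` over `(0, ∞)` gives the analogue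
`a J (s + 1) = s J s + b J (s - 1)` of the functional equation of `Γ`; with `s - 1` in place of `s`
it is the Bessel equation. -/

open scoped Topology

lemma integral_Ioi_eq_sub_of_hasDerivAt_of_tendsto {E : Type*} [NormedAddCommGroup E]
    [NormedSpace ℝ E] [CompleteSpace E] {f f' : ℝ → E} {a : ℝ} {l m : E}
    (hderiv : ∀ x ∈ Ioi a, HasDerivAt f (f' x) x) (hint : IntegrableOn f' (Ioi a))
    (hleft : Tendsto f (𝓝[>] a) (𝓝 l)) (htop : Tendsto f atTop (𝓝 m)) :
    ∫ x in Ioi a, f' x = m - l := by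
  have hupdate : ∀ x, a < x → Function.update f a l x = f x :=
    fun x hx => Function.update_of_ne hx.ne' l f
  have hcont : ContinuousWithinAt (Function.update f a l) (Ici a) a := by
    rwa [continuousWithinAt_update_same, Ici_sdiff_left]
  have hderiv' : ∀ x ∈ Ioi a, HasDerivAt (Function.update f a l) (f' x) x := fun x hx =>
    (hderiv x hx).congr_of_eventuallyEq ((lt_mem_nhds hx).mono hupdate)
  have htop' : Tendsto (Function.update f a l) atTop (𝓝 m) :=
    htop.congr' ((eventually_gt_atTop a).mono fun x hx => (hupdate x hx).symm)
  simpa using integral_Ioi_of_hasDerivAt_of_tendsto hcont hderiv' hint htop'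

lemma exp_neg_div_le_factorial_mul_pow {b t : ℝ} (hb : 0 < b) (ht : 0 < t) (N : ℕ) :
    Real.exp (-(b / t)) ≤ N.factorial * (t / b) ^ N := by
  have hpow : 0 < (b / t) ^ N / N.factorial := by positivity
  calc Real.exp (-(b / t)) = (Real.exp (b / t))⁻¹ := Real.exp_neg _
    _ ≤ ((b / t) ^ N / N.factorial)⁻¹ :=
        inv_anti₀ hpow (Real.pow_div_factorial_le_exp _ (by positivity) N)
    _ = N.factorial * (t / b) ^ N := by
        rw [inv_div, div_eq_mul_inv, ← inv_pow, inv_div]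

/-- The integrand `exp (-a t - b / t) t ^ (s - 1)` of the extended Gamma function, with the two
exponentials kept apart as in `uExt`. -/
noncomputable def extendedGammaIntegrand (s a b t : ℝ) : ℝ :=
  Real.exp (-(t * a)) * Real.exp (-(b / t)) * t ^ (s - 1)

/-- The two-parameter extended Gamma function `∫ exp (-a t - b / t) t ^ (s - 1) dt` over `(0, ∞)`
(Chaudhry and Zubair take `a = 1`). It is `2 (b / a) ^ (s / 2) K_s (2 √(a b))` for the modified
Bessel function `K_s`. -/
noncomputable def extendedGamma (s a b : ℝ) : ℝ :=
  ∫ t in Ioi (0 : ℝ), extendedGammaIntegrand s a b t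

section extendedGammaIntegrand

variable {a b t : ℝ}

lemma extendedGammaIntegrand_nonneg (s a b : ℝ) (ht : 0 ≤ t) :
    0 ≤ extendedGammaIntegrand s a b t := by
  unfold extendedGammaIntegrand
  positivity

lemma antitone_extendedGammaIntegrand (s a : ℝ) (ht : 0 ≤ t) :
    Antitone fun b => extendedGammaIntegrand s a b t := by
  intro b c hbc
  simp only [extendedGammaIntegrand]
  gcongr

lemma extendedGammaIntegrand_sub_one (s a b : ℝ) (ht : t ≠ 0) :
    extendedGammaIntegrand (s - 1) a b t = extendedGammaIntegrand s a b t / t := by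
  simp only [extendedGammaIntegrand, Real.rpow_sub_one ht (s - 1), mul_div_assoc]

lemma hasDerivAt_extendedGammaIntegrand_param (s a b : ℝ) (ht : t ≠ 0) :
    HasDerivAt (fun b => extendedGammaIntegrand s a b t)
      (-extendedGammaIntegrand (s - 1) a b t) b := by
  have hexp : HasDerivAt (fun b => Real.exp (-(b / t))) (Real.exp (-(b / t)) * -(1 / t)) b :=
    ((hasDerivAt_id b).div_const t).neg.exp
  refine ((hexp.const_mul (Real.exp (-(t * a)))).mul_const (t ^ (s - 1))).congr_deriv ?_
  rw [extendedGammaIntegrand_sub_one s a b ht, extendedGammaIntegrand]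
  ring

lemma hasDerivAt_extendedGammaIntegrand_add_one (s a b : ℝ) (ht : t ≠ 0) :
    HasDerivAt (extendedGammaIntegrand (s + 1) a b)
      (s * extendedGammaIntegrand s a b t + b * extendedGammaIntegrand (s - 1) a b t
        - a * extendedGammaIntegrand (s + 1) a b t) t := by
  have hleft : HasDerivAt (fun t => Real.exp (-(t * a))) (Real.exp (-(t * a)) * -(1 * a)) t :=
    ((hasDerivAt_id t).mul_const a).neg.exp
  have hright : HasDerivAt (fun t => Real.exp (-(b / t)))
      (Real.exp (-(b / t)) * -(b * -(t ^ 2)⁻¹)) t :=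
    ((hasDerivAt_inv ht).const_mul b).neg.exp
  have hpow : HasDerivAt (fun t : ℝ => t ^ (s + 1 - 1)) ((s + 1 - 1) * t ^ (s + 1 - 1 - 1)) t :=
    Real.hasDerivAt_rpow_const (Or.inl ht)
  refine ((hleft.mul hright).mul hpow).congr_deriv ?_
  rw [extendedGammaIntegrand_sub_one s a b ht]
  simp only [extendedGammaIntegrand, Pi.mul_apply, add_sub_cancel_right, Real.rpow_sub_one ht]
  field_simp
  ring

lemma continuousOn_extendedGammaIntegrand (s a b : ℝ) :
    ContinuousOn (extendedGammaIntegrand s a b) (Ioi 0) := fun t ht => by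
  have h := hasDerivAt_extendedGammaIntegrand_add_one (s - 1) a b (ne_of_gt ht)
  rw [sub_add_cancel] at h
  exact h.continuousAt.continuousWithinAt

lemma aestronglyMeasurable_extendedGammaIntegrand (s a b : ℝ) :
    AEStronglyMeasurable (extendedGammaIntegrand s a b) (volume.restrict (Ioi 0)) :=
  (continuousOn_extendedGammaIntegrand s a b).aestronglyMeasurable measurableSet_Ioi

lemma extendedGammaIntegrand_le (s a : ℝ) (hb : 0 < b) (ht : 0 < t) (N : ℕ) :
    extendedGammaIntegrand s a b t ≤
      N.factorial / b ^ N * (t ^ (s - 1 + N) * Real.exp (-a * t)) :=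
  calc extendedGammaIntegrand s a b t
      ≤ Real.exp (-(t * a)) * (N.factorial * (t / b) ^ N) * t ^ (s - 1) := by
        unfold extendedGammaIntegrand
        gcongr
        exact exp_neg_div_le_factorial_mul_pow hb ht N
    _ = N.factorial / b ^ N * (t ^ (s - 1 + N) * Real.exp (-a * t)) := by
        rw [Real.rpow_add_natCast ht.ne', div_pow, neg_mul, mul_comm a t]
        ring

lemma integrableOn_extendedGammaIntegrand (s : ℝ) (ha : 0 < a) (hb : 0 < b) :
    IntegrableOn (extendedGammaIntegrand s a b) (Ioi 0) := by
  obtain ⟨N, hN⟩ := exists_nat_gt (-s)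
  have hGamma : IntegrableOn (fun t : ℝ => t ^ (s - 1 + N) * Real.exp (-a * t)) (Ioi 0) := by
    simpa only [Real.rpow_one] using
      integrableOn_rpow_mul_exp_neg_mul_rpow (s := s - 1 + N) (by linarith) one_pos ha
  refine (hGamma.const_mul (N.factorial / b ^ N)).mono'
    (aestronglyMeasurable_extendedGammaIntegrand s a b) ?_
  filter_upwards [ae_restrict_mem measurableSet_Ioi] with t ht
  rw [Real.norm_of_nonneg (extendedGammaIntegrand_nonneg s a b ht.le)]
  exact extendedGammaIntegrand_le s a hb ht N

lemma tendsto_extendedGammaIntegrand_atTop (s b : ℝ) (ha : 0 < a) :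
    Tendsto (extendedGammaIntegrand s a b) atTop (𝓝 0) := by
  have hexp : Tendsto (fun t => Real.exp (-(b / t))) atTop (𝓝 1) := by
    simpa using (tendsto_const_nhds.div_atTop tendsto_id).neg.rexp
  have hdecay := tendsto_rpow_mul_exp_neg_mul_atTop_nhds_zero (s - 1) a ha
  have hprod := hexp.mul hdecay
  rw [mul_zero] at hprod
  refine hprod.congr fun t => ?_
  rw [extendedGammaIntegrand, neg_mul, mul_comm a t]
  ring

lemma tendsto_extendedGammaIntegrand_nhdsGT_zero (s a : ℝ) (hb : 0 < b) :
    Tendsto (extendedGammaIntegrand s a b) (𝓝[>] 0) (𝓝 0) := by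
  have hexp : Tendsto (fun t => Real.exp (-(t * a))) (𝓝[>] 0) (𝓝 1) :=
    tendsto_nhdsWithin_of_tendsto_nhds <| Continuous.tendsto' (by fun_prop) 0 1 (by simp)
  have hdecay := (tendsto_rpow_mul_exp_neg_mul_atTop_nhds_zero (1 - s) b hb).comp
    tendsto_inv_nhdsGT_zero
  have hprod := hexp.mul hdecay
  rw [mul_zero] at hprod
  refine hprod.congr' ?_
  filter_upwards [self_mem_nhdsWithin] with t ht
  have hinv : t⁻¹ ^ (1 - s) = t ^ (s - 1) := by
    rw [Real.inv_rpow (le_of_lt ht), ← Real.rpow_neg (le_of_lt ht), neg_sub]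
  rw [Function.comp_apply, hinv, extendedGammaIntegrand, neg_mul, ← div_eq_mul_inv]
  ring

end extendedGammaIntegrand

section extendedGamma

variable {a b : ℝ}

lemma hasDerivAt_extendedGamma (s : ℝ) (ha : 0 < a) (hb : 0 < b) :
    HasDerivAt (extendedGamma s a) (-extendedGamma (s - 1) a b) b := by
  have h := (hasDerivAt_integral_of_dominated_loc_of_deriv_le
    (μ := volume.restrict (Ioi 0)) (F := extendedGammaIntegrand s a)
    (F' := fun c t => -extendedGammaIntegrand (s - 1) a c t)
    (bound := extendedGammaIntegrand (s - 1) a (b / 2)) (Ioi_mem_nhds (half_lt_self hb))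
    (Eventually.of_forall fun c => aestronglyMeasurable_extendedGammaIntegrand s a c)
    (integrableOn_extendedGammaIntegrand s ha hb)
    (aestronglyMeasurable_extendedGammaIntegrand (s - 1) a b).neg ?_
    (integrableOn_extendedGammaIntegrand (s - 1) ha (half_pos hb)) ?_).2
  · rwa [integral_neg] at h
  · filter_upwards [ae_restrict_mem measurableSet_Ioi] with t ht c hc
    rw [norm_neg, Real.norm_of_nonneg (extendedGammaIntegrand_nonneg _ _ _ ht.le)]
    exact antitone_extendedGammaIntegrand (s - 1) a ht.le hc.le
  · filter_upwards [ae_restrict_mem measurableSet_Ioi] with t ht c _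
    exact hasDerivAt_extendedGammaIntegrand_param s a c ht.ne'

lemma mul_extendedGamma_add_one (s : ℝ) (ha : 0 < a) (hb : 0 < b) :
    a * extendedGamma (s + 1) a b = s * extendedGamma s a b + b * extendedGamma (s - 1) a b := by
  have hs := (integrableOn_extendedGammaIntegrand s ha hb).const_mul s
  have hpred := (integrableOn_extendedGammaIntegrand (s - 1) ha hb).const_mul b
  have hsucc := (integrableOn_extendedGammaIntegrand (s + 1) ha hb).const_mul a
  have hsum : Integrable (fun t => s * extendedGammaIntegrand s a b t
      + b * extendedGammaIntegrand (s - 1) a b t) (volume.restrict (Ioi 0)) := hs.add hpred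
  have h := integral_Ioi_eq_sub_of_hasDerivAt_of_tendsto
    (fun t ht => hasDerivAt_extendedGammaIntegrand_add_one s a b (ne_of_gt ht))
    (hsum.sub hsucc)
    (tendsto_extendedGammaIntegrand_nhdsGT_zero (s + 1) a hb)
    (tendsto_extendedGammaIntegrand_atTop (s + 1) b ha)
  rw [integral_sub hsum hsucc, integral_add hs hpred] at h
  simp only [integral_const_mul] at h
  unfold extendedGamma
  linarith

lemma hasDerivAt_extendedGamma_sq_div_four (s : ℝ) (ha : 0 < a) {y : ℝ} (hy : y ≠ 0) :
    HasDerivAt (fun x => extendedGamma s a (x ^ 2 / 4))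
      (-(y / 2) * extendedGamma (s - 1) a (y ^ 2 / 4)) y := by
  have hsq : HasDerivAt (fun x : ℝ => x ^ 2 / 4) (2 * y / 4) y := by
    simpa using (hasDerivAt_pow 2 y).div_const 4
  refine ((hasDerivAt_extendedGamma s ha (by positivity)).comp y hsq).congr_deriv ?_
  ring

end extendedGamma

section uExt

variable {lam y : ℝ}

lemma uExt_eq_extendedGamma (s lam y : ℝ) :
    uExt s lam y = lam ^ s / Real.Gamma s * extendedGamma s lam (y ^ 2 / 4) := by
  simp only [uExt, extendedGamma, extendedGammaIntegrand, div_div]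

lemma hasDerivAt_uExt (s : ℝ) (hlam : 0 < lam) (hy : y ≠ 0) :
    HasDerivAt (uExt s lam)
      (lam ^ s / Real.Gamma s * (-(y / 2) * extendedGamma (s - 1) lam (y ^ 2 / 4))) y := by
  rw [funext (uExt_eq_extendedGamma s lam)]
  exact (hasDerivAt_extendedGamma_sq_div_four s hlam hy).const_mul _

lemma hasDerivAt_deriv_uExt (s : ℝ) (hlam : 0 < lam) (hy : y ≠ 0) :
    HasDerivAt (deriv (uExt s lam))
      (lam ^ s / Real.Gamma s * (y ^ 2 / 4 * extendedGamma (s - 2) lam (y ^ 2 / 4)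
        - 1 / 2 * extendedGamma (s - 1) lam (y ^ 2 / 4))) y := by
  have hderiv : deriv (uExt s lam) =ᶠ[𝓝 y] fun x =>
      lam ^ s / Real.Gamma s * (-(x / 2) * extendedGamma (s - 1) lam (x ^ 2 / 4)) :=
    (eventually_ne_nhds hy).mono fun x hx => (hasDerivAt_uExt s hlam hx).deriv
  have hlin : HasDerivAt (fun x : ℝ => -(x / 2)) (-(1 / 2)) y :=
    ((hasDerivAt_id y).div_const 2).neg
  have hJ := hasDerivAt_extendedGamma_sq_div_four (s - 1) hlam hy
  rw [sub_sub, one_add_one_eq_two] at hJ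
  refine (((hlin.mul hJ).const_mul _).congr_of_eventuallyEq hderiv).congr_deriv ?_
  ring

end uExt

-- At `s = 0, -1, -2, …` Lean's `lam ^ s / Real.Gamma s` is `0`, the value of the entire function
-- `1 / Γ` there.
theorem uExt_solves_Bessel_extension_equation_general (s lam : ℝ) (hlam : 0 < lam) :
    (∀ y : ℝ, y ≠ 0 → DifferentiableAt ℝ (uExt s lam) y) ∧
    (∀ y : ℝ, y ≠ 0 → DifferentiableAt ℝ (deriv (uExt s lam)) y) ∧
    (∀ y : ℝ, y ≠ 0 →
      deriv (deriv (uExt s lam)) y + ((1 - 2 * s) / y) * deriv (uExt s lam) y =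
        lam * uExt s lam y) := by
  refine ⟨fun y hy => (hasDerivAt_uExt s hlam hy).differentiableAt,
    fun y hy => (hasDerivAt_deriv_uExt s hlam hy).differentiableAt, fun y hy => ?_⟩
  have hrec := mul_extendedGamma_add_one (s - 1) hlam (show 0 < y ^ 2 / 4 by positivity)
  rw [sub_add_cancel, sub_sub, one_add_one_eq_two] at hrec
  rw [(hasDerivAt_deriv_uExt s hlam hy).deriv, (hasDerivAt_uExt s hlam hy).deriv,
    uExt_eq_extendedGamma, mul_left_comm lam, hrec]
  field_simp
  ring

theorem uExt_solves_Bessel_extension_equation (s : ℝ) (hs : s ∈ Set.Ioo (0:ℝ) 1)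
    (lam : ℝ) (hlam : 0 < lam) :
    (∀ y : ℝ, 0 < y → DifferentiableAt ℝ (uExt s lam) y) ∧
    (∀ y : ℝ, 0 < y → DifferentiableAt ℝ (deriv (uExt s lam)) y) ∧
    (∀ y : ℝ, 0 < y →
      deriv (deriv (uExt s lam)) y + ((1 - 2 * s) / y) * deriv (uExt s lam) y =
        lam * uExt s lam y) := by
  obtain ⟨hdiff, hdiff_deriv, heq⟩ := uExt_solves_Bessel_extension_equation_general s lam hlam
  exact ⟨fun y hy => hdiff y hy.ne', fun y hy => hdiff_deriv y hy.ne', fun y hy => heq y hy.ne'⟩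
end

section
/- Let (X,d) be a metric space and μ a Borel measure on X satisfying the volume doubling property, and let a ∈ (−1,1). Then the product measure μ ⊗ ν_a on X × ℝ satisfies the volume doubling property with respect to the ℓ²-product distance: there exists a constant C > 0 such that for every (x₀,y₀) ∈ X × ℝ and every r > 0, (μ ⊗ ν_a)({(x,y) : d(x,x₀)² + (y−y₀)² < (2r)²}) ≤ C · (μ ⊗ ν_a)({(x,y) : d(x,x₀)² + (y−y₀)² < r²}). -/
open MeasureTheory Set

/-- The measure `ν_a` on `ℝ` with density `|y|^a` with respect to Lebesgue measure. -/
noncomputable def nuA (a : ℝ) : Measure ℝ :=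
  MeasureTheory.volume.withDensity fun y => ENNReal.ofReal (|y| ^ a)

/-!
An `ℓ²` ball of `X × Y` lies between a product of balls of half the radius and a product of balls
of the same radius, so products of doubling measures are doubling. The measure `ν_a` is doubling
for every `a > -1` because `ν_a(B(y, r))` is comparable to `r (|y| + r)^a`: if `|y| ≥ 2r`, the
density is comparable to `(|y| + r)^a` on the whole ball; if `|y| ≤ 2r`, the ball lies in
`B(0, 3r)`, whose measure is explicit. For the lower bound, every ball `B(y, r)` contains a ball
of radius `r / 3` on which the density is comparable to `(|y| + r)^a`.
-/

open Metric

/-- The volume doubling property of a measure, at all radii; Mathlib's `IsUnifLocDoublingMeasure`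
only concerns small radii. -/
def IsVolumeDoubling {X : Type*} [PseudoMetricSpace X] [MeasurableSpace X] (μ : Measure X) : Prop :=
  ∃ C : ℝ, 0 < C ∧ ∀ x : X, ∀ r : ℝ, 0 < r →
    μ (ball x (2 * r)) ≤ ENNReal.ofReal C * μ (ball x r)

/-- The open ball of `X × Y` for the `ℓ²`-product distance, written out because the distance of
Mathlib on `X × Y` is the maximum of the two distances. -/
def l2ProdBall {X Y : Type*} [PseudoMetricSpace X] [PseudoMetricSpace Y]
    (x : X) (y : Y) (r : ℝ) : Set (X × Y) :=
  {p | dist p.1 x ^ 2 + dist p.2 y ^ 2 < r ^ 2}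

section Product

variable {X Y : Type*} [PseudoMetricSpace X] [PseudoMetricSpace Y]

theorem l2ProdBall_subset_ball_prod_ball (x : X) (y : Y) {r : ℝ} (hr : 0 ≤ r) :
    l2ProdBall x y r ⊆ ball x r ×ˢ ball y r := by
  intro p (hp : dist p.1 x ^ 2 + dist p.2 y ^ 2 < r ^ 2)
  exact ⟨lt_of_pow_lt_pow_left₀ 2 hr (by linarith [sq_nonneg (dist p.2 y)]),
    lt_of_pow_lt_pow_left₀ 2 hr (by linarith [sq_nonneg (dist p.1 x)])⟩

theorem ball_prod_ball_half_subset_l2ProdBall (x : X) (y : Y) (r : ℝ) :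
    ball x (r / 2) ×ˢ ball y (r / 2) ⊆ l2ProdBall x y r := by
  rintro p ⟨hx, hy⟩
  have hx2 : dist p.1 x ^ 2 < (r / 2) ^ 2 := pow_lt_pow_left₀ hx dist_nonneg two_ne_zero
  have hy2 : dist p.2 y ^ 2 < (r / 2) ^ 2 := pow_lt_pow_left₀ hy dist_nonneg two_ne_zero
  change dist p.1 x ^ 2 + dist p.2 y ^ 2 < r ^ 2
  linarith [sq_nonneg r]

variable [MeasurableSpace X] [MeasurableSpace Y] {μ : Measure X} {ν : Measure Y}

theorem IsVolumeDoubling.exists_measure_ball_two_mul_le_half (hμ : IsVolumeDoubling μ) :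
    ∃ C : ℝ, 0 < C ∧ ∀ x : X, ∀ r : ℝ, 0 < r →
      μ (ball x (2 * r)) ≤ ENNReal.ofReal C * μ (ball x (r / 2)) := by
  obtain ⟨C, hC, hμ⟩ := hμ
  refine ⟨C * C, by positivity, fun x r hr => ?_⟩
  calc μ (ball x (2 * r)) ≤ ENNReal.ofReal C * μ (ball x (2 * (r / 2))) := by
        simpa only [mul_div_cancel₀ r two_ne_zero] using hμ x r hr
    _ ≤ ENNReal.ofReal C * (ENNReal.ofReal C * μ (ball x (r / 2))) := by
        gcongr
        exact hμ x (r / 2) (half_pos hr)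
    _ = ENNReal.ofReal (C * C) * μ (ball x (r / 2)) := by
        rw [ENNReal.ofReal_mul hC.le, mul_assoc]

theorem IsVolumeDoubling.exists_prod_l2ProdBall_two_mul_le [SFinite ν]
    (hμ : IsVolumeDoubling μ) (hν : IsVolumeDoubling ν) :
    ∃ C : ℝ, 0 < C ∧ ∀ x : X, ∀ y : Y, ∀ r : ℝ, 0 < r →
      μ.prod ν (l2ProdBall x y (2 * r)) ≤ ENNReal.ofReal C * μ.prod ν (l2ProdBall x y r) := by
  obtain ⟨C, hC, hμ⟩ := hμ.exists_measure_ball_two_mul_le_half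
  obtain ⟨D, hD, hν⟩ := hν.exists_measure_ball_two_mul_le_half
  refine ⟨C * D, by positivity, fun x y r hr => ?_⟩
  calc μ.prod ν (l2ProdBall x y (2 * r))
      ≤ μ.prod ν (ball x (2 * r) ×ˢ ball y (2 * r)) :=
        measure_mono (l2ProdBall_subset_ball_prod_ball x y (by positivity))
    _ = μ (ball x (2 * r)) * ν (ball y (2 * r)) := Measure.prod_prod _ _
    _ ≤ (ENNReal.ofReal C * μ (ball x (r / 2))) * (ENNReal.ofReal D * ν (ball y (r / 2))) :=
        mul_le_mul' (hμ x r hr) (hν y r hr)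
    _ = ENNReal.ofReal (C * D) * μ.prod ν (ball x (r / 2) ×ˢ ball y (r / 2)) := by
        rw [Measure.prod_prod, ENNReal.ofReal_mul hC.le, mul_mul_mul_comm]
    _ ≤ ENNReal.ofReal (C * D) * μ.prod ν (l2ProdBall x y r) := by
        gcongr
        exact ball_prod_ball_half_subset_l2ProdBall x y r

end Product

theorem rpow_le_rpow_abs_mul_rpow {x y K : ℝ} (hx : 0 < x) (hy : 0 < y) (hxy : x ≤ K * y)
    (hyx : y ≤ K * x) (a : ℝ) : x ^ a ≤ K ^ |a| * y ^ a := by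
  have hK : 0 < K := pos_of_mul_pos_left (hx.trans_le hxy) hy.le
  rcases le_total 0 a with ha | ha
  · calc x ^ a ≤ (K * y) ^ a := Real.rpow_le_rpow hx.le hxy ha
      _ = K ^ |a| * y ^ a := by rw [Real.mul_rpow hK.le hy.le, abs_of_nonneg ha]
  · calc x ^ a ≤ (K⁻¹ * y) ^ a :=
          Real.rpow_le_rpow_of_nonpos (by positivity) ((inv_mul_le_iff₀ hK).2 hyx) ha
      _ = K ^ |a| * y ^ a := by
          rw [Real.mul_rpow (by positivity) hy.le, Real.inv_rpow hK.le, ← Real.rpow_neg hK.le,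
            abs_of_nonpos ha]

theorem abs_mem_Ioo_of_mem_ball {y r t : ℝ} (ht : t ∈ ball y r) :
    |t| ∈ Ioo (|y| - r) (|y| + r) := by
  have h : |(|t| - |y|)| < r := (abs_abs_sub_abs_le t y).trans_lt ht
  exact ⟨by linarith [(abs_lt.1 h).1], by linarith [(abs_lt.1 h).2]⟩

theorem exists_abs_eq_abs_add {s : ℝ} (hs : 0 ≤ s) (y : ℝ) :
    ∃ z : ℝ, |z| = |y| + s ∧ dist z y = s := by
  rcases le_total 0 y with hy | hy
  · exact ⟨y + s, by rw [abs_of_nonneg hy, abs_of_nonneg (add_nonneg hy hs)],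
      by simp [abs_of_nonneg hs]⟩
  · exact ⟨y - s, by rw [abs_of_nonpos hy, abs_of_nonpos (by linarith)]; ring,
      by simp [abs_of_nonneg hs]⟩

section NuA

variable {a : ℝ}

theorem integrableOn_ball_zero_abs_rpow (ha : -1 < a) (R : ℝ) :
    IntegrableOn (fun t : ℝ => |t| ^ a) (ball 0 R) := by
  refine integrableOn_ball_of_norm_le_rpow (C := 1) (α := -a) (by simp) (by simpa using by linarith)
    (ae_of_all _ fun t => ?_) (Measurable.aestronglyMeasurable (by fun_prop))
  simp [Real.abs_rpow_of_nonneg (abs_nonneg t)]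

theorem setIntegral_ball_zero_abs_rpow (ha : -1 < a) {R : ℝ} (hR : 0 ≤ R) :
    ∫ t in ball (0 : ℝ) R, |t| ^ a = 2 * (R ^ (a + 1) / (a + 1)) := by
  calc ∫ t in ball (0 : ℝ) R, |t| ^ a
      = ∫ t : ℝ, (Iio R).indicator (fun s => s ^ a) |t| := by
        rw [← integral_indicator measurableSet_ball]
        simp [indicator]
    _ = 2 * ∫ t in (0 : ℝ)..R, t ^ a := by
        rw [integral_comp_abs, setIntegral_indicator measurableSet_Iio, Ioi_inter_Iio,
          ← integral_Ioc_eq_integral_Ioo, intervalIntegral.integral_of_le hR]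
    _ = 2 * (R ^ (a + 1) / (a + 1)) := by
        rw [integral_rpow (Or.inl ha), Real.zero_rpow (by linarith), sub_zero]

instance sFinite_nuA (a : ℝ) : SFinite (nuA a) := by
  unfold nuA
  infer_instance

theorem nuA_ball_zero (ha : -1 < a) {R : ℝ} (hR : 0 ≤ R) :
    nuA a (ball 0 R) = ENNReal.ofReal (2 * (R ^ (a + 1) / (a + 1))) := by
  rw [nuA, withDensity_apply' _, ← setIntegral_ball_zero_abs_rpow ha hR,
    ofReal_integral_eq_lintegral_ofReal (integrableOn_ball_zero_abs_rpow ha R)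
      (ae_of_all _ fun t => by positivity)]

theorem nuA_le_ofReal_mul_volume {c : ℝ} {s : Set ℝ} (h : ∀ t ∈ s, |t| ^ a ≤ c) :
    nuA a s ≤ ENNReal.ofReal c * volume s := by
  rw [nuA, withDensity_apply' _, ← setLIntegral_const]
  exact setLIntegral_mono measurable_const fun t ht => ENNReal.ofReal_le_ofReal (h t ht)

theorem ofReal_mul_volume_le_nuA {c : ℝ} {s : Set ℝ} (h : ∀ t ∈ s, c ≤ |t| ^ a) :
    ENNReal.ofReal c * volume s ≤ nuA a s := by
  rw [nuA, withDensity_apply' _, ← setLIntegral_const]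
  exact setLIntegral_mono (by fun_prop) fun t ht => ENNReal.ofReal_le_ofReal (h t ht)

theorem nuA_ball_le_of_two_mul_le_abs (a : ℝ) {y r : ℝ} (hr : 0 < r) (hy : 2 * r ≤ |y|) :
    nuA a (ball y r) ≤ ENNReal.ofReal (2 * 3 ^ |a| * (r * (|y| + r) ^ a)) := by
  have density_le : ∀ t ∈ ball y r, |t| ^ a ≤ 3 ^ |a| * (|y| + r) ^ a := fun t ht => by
    have := abs_mem_Ioo_of_mem_ball ht
    exact rpow_le_rpow_abs_mul_rpow (by linarith [this.1]) (by positivity)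
      (by linarith [this.2]) (by linarith [this.1]) a
  calc nuA a (ball y r) ≤ ENNReal.ofReal (3 ^ |a| * (|y| + r) ^ a) * volume (ball y r) :=
        nuA_le_ofReal_mul_volume density_le
    _ = ENNReal.ofReal (2 * 3 ^ |a| * (r * (|y| + r) ^ a)) := by
        rw [Real.volume_ball, ← ENNReal.ofReal_mul (by positivity)]
        ring_nf

theorem nuA_ball_le_of_abs_le_two_mul (ha : -1 < a) {y r : ℝ} (hr : 0 < r) (hy : |y| ≤ 2 * r) :
    nuA a (ball y r) ≤
      ENNReal.ofReal (2 * (3 ^ (a + 1) / (a + 1)) * 3 ^ |a| * (r * (|y| + r) ^ a)) := by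
  have ha1 : 0 < a + 1 := by linarith
  have hra : r ^ a ≤ 3 ^ |a| * (|y| + r) ^ a :=
    rpow_le_rpow_abs_mul_rpow hr (by positivity) (by linarith [abs_nonneg y]) (by linarith) a
  have ball_subset : ball y r ⊆ ball 0 (3 * r) :=
    ball_subset_ball' (by rw [dist_zero_right, Real.norm_eq_abs]; linarith)
  calc nuA a (ball y r) ≤ nuA a (ball 0 (3 * r)) := measure_mono ball_subset
    _ = ENNReal.ofReal (2 * (3 ^ (a + 1) / (a + 1)) * (r * r ^ a)) := by
        rw [nuA_ball_zero ha (by positivity), Real.mul_rpow (by norm_num) hr.le,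
          Real.rpow_add_one hr.ne']
        ring_nf
    _ ≤ ENNReal.ofReal (2 * (3 ^ (a + 1) / (a + 1)) * (r * (3 ^ |a| * (|y| + r) ^ a))) := by
        gcongr
    _ = ENNReal.ofReal (2 * (3 ^ (a + 1) / (a + 1)) * 3 ^ |a| * (r * (|y| + r) ^ a)) := by
        ring_nf

theorem exists_nuA_ball_le (ha : -1 < a) : ∃ C : ℝ, 0 < C ∧ ∀ y r : ℝ, 0 < r →
    nuA a (ball y r) ≤ ENNReal.ofReal (C * (r * (|y| + r) ^ a)) := by
  refine ⟨max (2 * 3 ^ |a|) (2 * (3 ^ (a + 1) / (a + 1)) * 3 ^ |a|), by positivity,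
    fun y r hr => ?_⟩
  rcases le_total (2 * r) |y| with hy | hy
  · refine (nuA_ball_le_of_two_mul_le_abs a hr hy).trans ?_
    gcongr
    exact le_max_left _ _
  · refine (nuA_ball_le_of_abs_le_two_mul ha hr hy).trans ?_
    gcongr
    exact le_max_right _ _

theorem ofReal_mul_rpow_le_nuA_ball (a y : ℝ) {r : ℝ} (hr : 0 < r) :
    ENNReal.ofReal (r * (|y| + r) ^ a) ≤
      ENNReal.ofReal (3 / 2 * 3 ^ |a|) * nuA a (ball y r) := by
  obtain ⟨z, hz, hzy⟩ := exists_abs_eq_abs_add (by positivity : 0 ≤ 2 * r / 3) y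
  have le_density : ∀ t ∈ ball z (r / 3), (3 ^ |a|)⁻¹ * (|y| + r) ^ a ≤ |t| ^ a := fun t ht => by
    have := abs_mem_Ioo_of_mem_ball ht
    rw [hz] at this
    have hy := abs_nonneg y
    exact (inv_mul_le_iff₀ (by positivity)).2 <| rpow_le_rpow_abs_mul_rpow (by positivity)
      (by linarith [this.1]) (by linarith [this.1]) (by linarith [this.2]) a
  calc ENNReal.ofReal (r * (|y| + r) ^ a)
      = ENNReal.ofReal (3 / 2 * 3 ^ |a|) *
          (ENNReal.ofReal ((3 ^ |a|)⁻¹ * (|y| + r) ^ a) * volume (ball z (r / 3))) := by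
        rw [Real.volume_ball, ← ENNReal.ofReal_mul (by positivity),
          ← ENNReal.ofReal_mul (by positivity)]
        congr 1
        field
    _ ≤ ENNReal.ofReal (3 / 2 * 3 ^ |a|) * nuA a (ball z (r / 3)) := by
        gcongr
        exact ofReal_mul_volume_le_nuA le_density
    _ ≤ ENNReal.ofReal (3 / 2 * 3 ^ |a|) * nuA a (ball y r) := by
        gcongr
        exact ball_subset_ball' (by linarith)

theorem isVolumeDoubling_nuA (ha : -1 < a) : IsVolumeDoubling (nuA a) := by
  obtain ⟨C, hC, nuA_ball_le⟩ := exists_nuA_ball_le ha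
  refine ⟨C * 2 * 2 ^ |a| * (3 / 2 * 3 ^ |a|), by positivity, fun y r hr => ?_⟩
  have rpow_le : (|y| + 2 * r) ^ a ≤ 2 ^ |a| * (|y| + r) ^ a :=
    rpow_le_rpow_abs_mul_rpow (by positivity) (by positivity) (by linarith [abs_nonneg y])
      (by linarith [abs_nonneg y]) a
  calc nuA a (ball y (2 * r)) ≤ ENNReal.ofReal (C * (2 * r * (|y| + 2 * r) ^ a)) :=
        nuA_ball_le y (2 * r) (by positivity)
    _ ≤ ENNReal.ofReal (C * (2 * r * (2 ^ |a| * (|y| + r) ^ a))) := by gcongr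
    _ = ENNReal.ofReal (C * 2 * 2 ^ |a|) * ENNReal.ofReal (r * (|y| + r) ^ a) := by
        rw [← ENNReal.ofReal_mul (by positivity)]
        ring_nf
    _ ≤ ENNReal.ofReal (C * 2 * 2 ^ |a|) *
          (ENNReal.ofReal (3 / 2 * 3 ^ |a|) * nuA a (ball y r)) := by
        gcongr
        exact ofReal_mul_rpow_le_nuA_ball a y hr
    _ = ENNReal.ofReal (C * 2 * 2 ^ |a| * (3 / 2 * 3 ^ |a|)) * nuA a (ball y r) := by
        rw [ENNReal.ofReal_mul (p := C * 2 * 2 ^ |a|) (by positivity), mul_assoc (ENNReal.ofReal _)]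

end NuA

theorem product_measure_doubling_general {X : Type*} [PseudoMetricSpace X] [MeasurableSpace X]
    {μ : Measure X} (hμ : IsVolumeDoubling μ) {a : ℝ} (ha : -1 < a) :
    ∃ C : ℝ, 0 < C ∧ ∀ x₀ : X, ∀ y₀ r : ℝ, 0 < r →
      (μ.prod (nuA a)) {p : X × ℝ | dist p.1 x₀ ^ 2 + (p.2 - y₀) ^ 2 < (2 * r) ^ 2} ≤
        ENNReal.ofReal C *
          (μ.prod (nuA a)) {p : X × ℝ | dist p.1 x₀ ^ 2 + (p.2 - y₀) ^ 2 < r ^ 2} := by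
  simpa only [l2ProdBall, Real.dist_eq, sq_abs] using
    hμ.exists_prod_l2ProdBall_two_mul_le (isVolumeDoubling_nuA ha)

theorem product_measure_doubling {X : Type*} [MetricSpace X] [MeasurableSpace X] [BorelSpace X]
    (μ : Measure X) [SigmaFinite μ]
    (hμ : ∃ C : ℝ, 0 < C ∧ ∀ x : X, ∀ r : ℝ, 0 < r →
      μ (Metric.ball x (2 * r)) ≤ ENNReal.ofReal C * μ (Metric.ball x r))
    (a : ℝ) (ha : a ∈ Set.Ioo (-1 : ℝ) 1) :
    ∃ C : ℝ, 0 < C ∧ ∀ x₀ : X, ∀ y₀ r : ℝ, 0 < r →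
      (μ.prod (nuA a)) {p : X × ℝ | dist p.1 x₀ ^ 2 + (p.2 - y₀) ^ 2 < (2 * r) ^ 2} ≤
        ENNReal.ofReal C *
          (μ.prod (nuA a)) {p : X × ℝ | dist p.1 x₀ ^ 2 + (p.2 - y₀) ^ 2 < r ^ 2} :=
  product_measure_doubling_general hμ ha.1
end

section
/- (Krein's correspondence, existence and uniqueness part.) Let A : [0,∞) → [0,∞) be measurable and locally integrable (∫₀^K A(r) dr < ∞ for every K > 0), and let λ ≥ 0. Then there exists a unique continuous function R : [0,∞) → ℝ such that R is nonincreasing, R(0) = 1, R(z) ≥ 0 for all z ≥ 0, and there exists b ∈ ℝ with R(z) = 1 + b z + λ ∫₀^z (z − r) A(r) R(r) dr for all z ≥ 0. (The integral equation is the weak formulation of R_{zz}(z,λ) = λ A(z) R(z,λ) with R(0,λ) = 1 and lim_{z→∞} R(z,λ) ≥ 0.) -/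
open MeasureTheory Set

/-- `R` is the nonincreasing solution of the Krein string equation
`R'' = λ A R`, `R(0) = 1`, `lim_{z→∞} R(z) ≥ 0`, in its weak (integral) formulation. -/
def IsKreinSolution (A : ℝ → ℝ) (lam : ℝ) (R : ℝ → ℝ) : Prop :=
  ContinuousOn R (Set.Ici 0) ∧ AntitoneOn R (Set.Ici 0) ∧ R 0 = 1 ∧
    (∀ z : ℝ, 0 ≤ z → 0 ≤ R z) ∧
    ∃ b : ℝ, ∀ z : ℝ, 0 ≤ z →
      R z = 1 + b * z + lam * ∫ r in (0:ℝ)..z, (z - r) * A r * R r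

/-!
Put `B = λ A`. The equation `w = 1 + b z + ∫₀ᶻ (z - r) B(r) w(r) dr` is of Volterra type, so for
each initial slope `b` it has exactly one solution, namely `u + b v` with `u ≥ 1` and `v ≥ z` the
solutions for the data `1` and `z`. Two admissible solutions differ by a multiple of the unbounded
function `v` while both take values in `[0, 1]`, hence they agree.

For existence, shoot backwards: for `N > 0` the solution with `w(N) = 0`, `w'(N) = -1` is
nonnegative and decreasing on `[0, N]`, and after normalisation it is the solution with slope
`b_N = -u(N) / v(N)`. These slopes increase with `N` and are at most `0`; the solution whose slope
is `lim b_N` is nonnegative and nonincreasing on the whole half-line.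
-/

open Filter Topology

section Volterra

variable {B g w w₁ w₂ : ℝ → ℝ} {K C M z : ℝ}

/-- The Volterra operator `w ↦ y` solving `y'' = B w`, `y(0) = y'(0) = 0` in integrated form. -/
noncomputable def volterra (B w : ℝ → ℝ) (z : ℝ) : ℝ :=
  ∫ r in (0 : ℝ)..z, (z - r) * B r * w r

@[simp]
theorem volterra_zero_right (B w : ℝ → ℝ) : volterra B w 0 = 0 :=
  intervalIntegral.integral_same

theorem volterra_const_mul_left (c : ℝ) (B w : ℝ → ℝ) (z : ℝ) :
    volterra (fun r => c * B r) w z = c * volterra B w z := by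
  simp only [volterra]
  rw [← intervalIntegral.integral_const_mul]
  congr 1 with r
  ring

theorem volterra_const_mul_right (B : ℝ → ℝ) (c : ℝ) (w : ℝ → ℝ) (z : ℝ) :
    volterra B (fun r => c * w r) z = c * volterra B w z := by
  simp only [volterra]
  rw [← intervalIntegral.integral_const_mul]
  congr 1 with r
  ring

theorem volterra_congr (h : EqOn w₁ w₂ (Icc 0 K)) :
    EqOn (volterra B w₁) (volterra B w₂) (Icc 0 K) := fun z hz =>
  intervalIntegral.integral_congr fun r hr => by
    rw [uIcc_of_le hz.1] at hr
    simp only [h ⟨hr.1, hr.2.trans hz.2⟩]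

theorem volterra_nonneg (hB0 : ∀ r ∈ Icc 0 K, 0 ≤ B r) (hw0 : ∀ r ∈ Icc 0 K, 0 ≤ w r)
    (hz : z ∈ Icc 0 K) : 0 ≤ volterra B w z :=
  intervalIntegral.integral_nonneg hz.1 fun r hr =>
    have hrK : r ∈ Icc 0 K := ⟨hr.1, hr.2.trans hz.2⟩
    mul_nonneg (mul_nonneg (sub_nonneg.2 hr.2) (hB0 r hrK)) (hw0 r hrK)

theorem intervalIntegrable_mul_continuousOn (hB : IntervalIntegrable B volume 0 K)
    (hw : ContinuousOn w (Icc 0 K)) {x y : ℝ} (hx : x ∈ Icc 0 K) (hy : y ∈ Icc 0 K) :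
    IntervalIntegrable (fun r => B r * w r) volume x y :=
  (hB.mono_set (uIcc_subset_uIcc (Icc_subset_uIcc hx) (Icc_subset_uIcc hy))).mul_continuousOn
    (hw.mono (uIcc_subset_Icc hx hy))

theorem intervalIntegrable_sub_mul_mul (hB : IntervalIntegrable B volume 0 K)
    (hw : ContinuousOn w (Icc 0 K)) (c : ℝ) {x y : ℝ} (hx : x ∈ Icc 0 K) (hy : y ∈ Icc 0 K) :
    IntervalIntegrable (fun r => (c - r) * B r * w r) volume x y := by
  have hcw : ContinuousOn (fun r => (c - r) * w r) (Icc 0 K) := by fun_prop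
  convert intervalIntegrable_mul_continuousOn hB hcw hx hy using 2 with r
  ring

theorem volterra_linear_combination (hB : IntervalIntegrable B volume 0 K)
    (hw₁ : ContinuousOn w₁ (Icc 0 K)) (hw₂ : ContinuousOn w₂ (Icc 0 K)) (a b : ℝ)
    (hz : z ∈ Icc 0 K) :
    volterra B (fun r => a * w₁ r + b * w₂ r) z = a * volterra B w₁ z + b * volterra B w₂ z := by
  have h0 : (0 : ℝ) ∈ Icc 0 K := ⟨le_rfl, hz.1.trans hz.2⟩
  simp only [volterra]
  rw [← intervalIntegral.integral_const_mul, ← intervalIntegral.integral_const_mul,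
    ← intervalIntegral.integral_add ((intervalIntegrable_sub_mul_mul hB hw₁ z h0 hz).const_mul a)
      ((intervalIntegrable_sub_mul_mul hB hw₂ z h0 hz).const_mul b)]
  congr 1 with r
  ring

theorem integral_sub_mul_mul (hB : IntervalIntegrable B volume 0 K)
    (hw : ContinuousOn w (Icc 0 K)) (c : ℝ) {x y : ℝ} (hx : x ∈ Icc 0 K) (hy : y ∈ Icc 0 K) :
    ∫ r in x..y, (c - r) * B r * w r =
      c * (∫ r in x..y, B r * w r) - ∫ r in x..y, B r * (r * w r) := by
  have hrw : ContinuousOn (fun r => r * w r) (Icc 0 K) := by fun_prop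
  rw [← intervalIntegral.integral_const_mul, ← intervalIntegral.integral_sub
    ((intervalIntegrable_mul_continuousOn hB hw hx hy).const_mul c)
    (intervalIntegrable_mul_continuousOn hB hrw hx hy)]
  congr 1 with r
  ring

theorem continuousOn_volterra (hB : IntervalIntegrable B volume 0 K)
    (hw : ContinuousOn w (Icc 0 K)) : ContinuousOn (volterra B w) (Icc 0 K) := by
  have hprimitive {f : ℝ → ℝ} (hf : ContinuousOn f (Icc 0 K)) :
      ContinuousOn (fun z => ∫ r in (0 : ℝ)..z, B r * f r) (Icc 0 K) := by
    intro z hz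
    have hK : 0 ≤ K := hz.1.trans hz.2
    have := intervalIntegral.continuousOn_primitive_interval'
      (intervalIntegrable_mul_continuousOn hB hf (left_mem_Icc.2 hK) (right_mem_Icc.2 hK))
      left_mem_uIcc
    exact (uIcc_of_le hK ▸ this) z hz
  have hrw : ContinuousOn (fun r => r * w r) (Icc 0 K) := by fun_prop
  exact ((continuousOn_id.mul (hprimitive hw)).sub (hprimitive hrw)).congr fun z hz =>
    integral_sub_mul_mul hB hw z ⟨le_rfl, hz.1.trans hz.2⟩ hz

theorem monotoneOn_volterra (hB : IntervalIntegrable B volume 0 K) (hB0 : ∀ r ∈ Icc 0 K, 0 ≤ B r)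
    (hw : ContinuousOn w (Icc 0 K)) (hw0 : ∀ r ∈ Icc 0 K, 0 ≤ w r) :
    MonotoneOn (volterra B w) (Icc 0 K) := by
  intro x hx y hy hxy
  have h0 : (0 : ℝ) ∈ Icc 0 K := ⟨le_rfl, hx.1.trans hx.2⟩
  have hBw : ∀ r ∈ Icc 0 y, 0 ≤ B r * w r := fun r hr =>
    have hrK : r ∈ Icc 0 K := ⟨hr.1, hr.2.trans hy.2⟩
    mul_nonneg (hB0 r hrK) (hw0 r hrK)
  have hint {z : ℝ} (hz : z ∈ Icc 0 K) := intervalIntegrable_sub_mul_mul hB hw y h0 hz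
  calc volterra B w x ≤ ∫ r in (0 : ℝ)..x, (y - r) * B r * w r := by
        refine intervalIntegral.integral_mono_on hx.1
          (intervalIntegrable_sub_mul_mul hB hw x h0 hx) (hint hx) fun r hr => ?_
        rw [mul_assoc, mul_assoc]
        exact mul_le_mul_of_nonneg_right (sub_le_sub_right hxy r)
          (hBw r ⟨hr.1, hr.2.trans hxy⟩)
    _ ≤ volterra B w y := by
        refine intervalIntegral.integral_mono_interval le_rfl hx.1 hxy ?_ (hint hy)
        refine ae_restrict_of_forall_mem measurableSet_Ioc fun r hr => ?_
        simp only [Pi.zero_apply, mul_assoc]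
        exact mul_nonneg (sub_nonneg.2 hr.2) (hBw r ⟨hr.1.le, hr.2⟩)

theorem sub_mul_exp_le (hM : 0 < M) (z r : ℝ) :
    (z - r) * Real.exp (M * r) ≤ Real.exp (M * z) / M := by
  have hsplit : Real.exp (M * z) = Real.exp (M * (z - r)) * Real.exp (M * r) := by
    rw [← Real.exp_add]
    ring_nf
  have hlin : (z - r) * M ≤ Real.exp (M * (z - r)) := by
    linarith [Real.add_one_le_exp (M * (z - r))]
  rw [le_div_iff₀ hM, hsplit, mul_right_comm]
  gcongr

-- For large `M` the weight `exp (M z)` makes `volterra B` a contraction.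
theorem abs_volterra_le_of_abs_le_exp (hB : IntervalIntegrable B volume 0 K) (hM : 0 < M)
    (hw : ∀ r ∈ Icc 0 K, |w r| ≤ C * Real.exp (M * r)) (hz : z ∈ Icc 0 K) :
    |volterra B w z| ≤ (∫ r in (0 : ℝ)..K, |B r|) / M * C * Real.exp (M * z) := by
  have hK : 0 ≤ K := hz.1.trans hz.2
  have hC : 0 ≤ C := by simpa using (abs_nonneg _).trans (hw 0 ⟨le_rfl, hK⟩)
  have hpointwise : ∀ r ∈ Ioc 0 z,
      ‖(z - r) * B r * w r‖ ≤ C * Real.exp (M * z) / M * |B r| := fun r hr => by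
    have hzr : 0 ≤ z - r := sub_nonneg.2 hr.2
    calc ‖(z - r) * B r * w r‖ = (z - r) * |B r| * |w r| := by
          rw [Real.norm_eq_abs, abs_mul, abs_mul, abs_of_nonneg hzr]
      _ ≤ (z - r) * |B r| * (C * Real.exp (M * r)) := by
          gcongr
          exact hw r ⟨hr.1.le, hr.2.trans hz.2⟩
      _ = C * |B r| * ((z - r) * Real.exp (M * r)) := by ring
      _ ≤ C * |B r| * (Real.exp (M * z) / M) := by
          gcongr
          exact sub_mul_exp_le hM z r
      _ = C * Real.exp (M * z) / M * |B r| := by ring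
  have hBz : IntervalIntegrable B volume 0 z :=
    hB.mono_set (uIcc_subset_uIcc left_mem_uIcc (Icc_subset_uIcc hz))
  calc |volterra B w z| ≤ ∫ r in (0 : ℝ)..z, C * Real.exp (M * z) / M * |B r| :=
        intervalIntegral.norm_integral_le_of_norm_le hz.1 (.of_forall hpointwise)
          (hBz.abs.const_mul _)
    _ = C * Real.exp (M * z) / M * (∫ r in (0 : ℝ)..z, |B r|) :=
        intervalIntegral.integral_const_mul _ _
    _ ≤ C * Real.exp (M * z) / M * (∫ r in (0 : ℝ)..K, |B r|) := by
        gcongr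
        exact intervalIntegral.integral_mono_interval le_rfl hz.1 hz.2
          (.of_forall fun r => abs_nonneg (B r)) hB.abs
    _ = (∫ r in (0 : ℝ)..K, |B r|) / M * C * Real.exp (M * z) := by ring

theorem exists_abs_iterate_volterra_le (hB : IntervalIntegrable B volume 0 K)
    (hw : ContinuousOn w (Icc 0 K)) :
    ∃ C, ∀ n : ℕ, ∀ z ∈ Icc 0 K, |(volterra B)^[n] w z| ≤ C * (1 / 2) ^ n := by
  obtain ⟨C, hC⟩ := isCompact_Icc.exists_bound_of_continuousOn hw
  set I := ∫ r in (0 : ℝ)..K, |B r|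
  set M := 2 * |I| + 1
  have hM : 0 < M := by positivity
  have hIM : I / M ≤ 1 / 2 := by
    rw [div_le_iff₀ hM]
    linarith [le_abs_self I]
  have hweighted (n : ℕ) : ∀ z ∈ Icc 0 K,
      |(volterra B)^[n] w z| ≤ |C| * (1 / 2) ^ n * Real.exp (M * z) := by
    induction n with
    | zero =>
      intro z hz
      calc |w z| ≤ |C| := (hC z hz).trans (le_abs_self C)
        _ ≤ |C| * Real.exp (M * z) :=
          le_mul_of_one_le_right (abs_nonneg C) (Real.one_le_exp (mul_nonneg hM.le hz.1))
        _ = |C| * (1 / 2) ^ 0 * Real.exp (M * z) := by rw [pow_zero, mul_one]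
    | succ n ih =>
      intro z hz
      rw [Function.iterate_succ_apply']
      calc |volterra B ((volterra B)^[n] w) z|
          ≤ I / M * (|C| * (1 / 2) ^ n) * Real.exp (M * z) :=
            abs_volterra_le_of_abs_le_exp hB hM ih hz
        _ ≤ 1 / 2 * (|C| * (1 / 2) ^ n) * Real.exp (M * z) := by gcongr
        _ = |C| * (1 / 2) ^ (n + 1) * Real.exp (M * z) := by ring
  refine ⟨|C| * Real.exp (M * K), fun n z hz => (hweighted n z hz).trans ?_⟩
  rw [mul_right_comm]
  gcongr
  exact hz.2

theorem eqOn_zero_of_eqOn_volterra (hB : IntervalIntegrable B volume 0 K)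
    (hw : ContinuousOn w (Icc 0 K)) (h : EqOn w (volterra B w) (Icc 0 K)) :
    EqOn w 0 (Icc 0 K) := by
  have hiter (n : ℕ) : EqOn ((volterra B)^[n] w) w (Icc 0 K) := by
    induction n with
    | zero => exact eqOn_refl w _
    | succ n ih =>
      rw [Function.iterate_succ']
      exact (volterra_congr ih).trans h.symm
  obtain ⟨C, hC⟩ := exists_abs_iterate_volterra_le hB hw
  intro z hz
  have hlim : Tendsto (fun n : ℕ => C * (1 / 2 : ℝ) ^ n) atTop (𝓝 0) := by
    simpa using (tendsto_pow_atTop_nhds_zero_of_lt_one (r := (1 / 2 : ℝ)) (by norm_num)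
      (by norm_num)).const_mul C
  have habs : |w z| ≤ 0 := ge_of_tendsto' hlim fun n => hiter n hz ▸ hC n z hz
  simpa using habs

theorem eqOn_of_eqOn_add_volterra (hB : IntervalIntegrable B volume 0 K)
    (hw₁ : ContinuousOn w₁ (Icc 0 K)) (hw₂ : ContinuousOn w₂ (Icc 0 K))
    (h₁ : EqOn w₁ (g + volterra B w₁) (Icc 0 K)) (h₂ : EqOn w₂ (g + volterra B w₂) (Icc 0 K)) :
    EqOn w₁ w₂ (Icc 0 K) := by
  have hdiff : EqOn (fun r => 1 * w₁ r + (-1) * w₂ r) 0 (Icc 0 K) := by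
    refine eqOn_zero_of_eqOn_volterra hB (by fun_prop) fun z hz => ?_
    simp only [volterra_linear_combination hB hw₁ hw₂ _ _ hz, h₁ hz, h₂ hz, Pi.add_apply]
    ring
  intro z hz
  have := hdiff hz
  simp only [Pi.zero_apply] at this
  linarith

end Volterra

section VolterraSolution

variable {B g : ℝ → ℝ} {K z : ℝ}

/-- The Neumann series for the solution of `w = g + volterra B w`; it converges on `[0, K]` as soon
as `B` is integrable and `g` is continuous there. -/
noncomputable def volterraSolution (B g : ℝ → ℝ) (z : ℝ) : ℝ :=
  ∑' n : ℕ, (volterra B)^[n] g z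

theorem continuousOn_iterate_volterra (hB : IntervalIntegrable B volume 0 K)
    (hg : ContinuousOn g (Icc 0 K)) (n : ℕ) : ContinuousOn ((volterra B)^[n] g) (Icc 0 K) := by
  induction n with
  | zero => exact hg
  | succ n ih =>
    rw [Function.iterate_succ_apply']
    exact continuousOn_volterra hB ih

theorem summable_iterate_volterra (hB : IntervalIntegrable B volume 0 K)
    (hg : ContinuousOn g (Icc 0 K)) (hz : z ∈ Icc 0 K) :
    Summable fun n : ℕ => (volterra B)^[n] g z :=
  have ⟨C, hC⟩ := exists_abs_iterate_volterra_le hB hg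
  (summable_geometric_two.mul_left C).of_norm_bounded fun n => hC n z hz

theorem continuousOn_volterraSolution (hB : IntervalIntegrable B volume 0 K)
    (hg : ContinuousOn g (Icc 0 K)) : ContinuousOn (volterraSolution B g) (Icc 0 K) :=
  have ⟨C, hC⟩ := exists_abs_iterate_volterra_le hB hg
  continuousOn_tsum (continuousOn_iterate_volterra hB hg) (summable_geometric_two.mul_left C) hC

theorem hasSum_volterra_iterate (hB : IntervalIntegrable B volume 0 K)
    (hg : ContinuousOn g (Icc 0 K)) (hz : z ∈ Icc 0 K) :
    HasSum (fun n : ℕ => volterra B ((volterra B)^[n] g) z)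
      (volterra B (volterraSolution B g) z) := by
  have h0 : (0 : ℝ) ∈ Icc 0 K := ⟨le_rfl, hz.1.trans hz.2⟩
  have hmem {r : ℝ} (hr : r ∈ uIoc 0 z) : r ∈ Icc 0 K :=
    uIcc_subset_Icc h0 hz (uIoc_subset_uIcc hr)
  obtain ⟨C, hC⟩ := exists_abs_iterate_volterra_le hB hg
  refine intervalIntegral.hasSum_integral_of_dominated_convergence
    (fun n r => |(z - r) * B r| * (C * (1 / 2) ^ n)) (fun n => ?_) (fun n => ?_) ?_ ?_ ?_
  · exact (intervalIntegrable_sub_mul_mul hB (continuousOn_iterate_volterra hB hg n) z h0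
      hz).aestronglyMeasurable_restrict_uIoc
  · refine .of_forall fun r hr => ?_
    rw [norm_mul, Real.norm_eq_abs]
    gcongr
    exact hC n r (hmem hr)
  · exact .of_forall fun r _ => (summable_geometric_two.mul_left C).mul_left _
  · simp only [tsum_mul_left]
    simpa using (intervalIntegrable_sub_mul_mul hB continuousOn_const z h0 hz
      (w := fun _ => 1)).abs.mul_const _
  · exact .of_forall fun r hr => (summable_iterate_volterra hB hg (hmem hr)).hasSum.mul_left _

theorem eqOn_volterraSolution (hB : IntervalIntegrable B volume 0 K)
    (hg : ContinuousOn g (Icc 0 K)) :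
    EqOn (volterraSolution B g) (g + volterra B (volterraSolution B g)) (Icc 0 K) := by
  intro z hz
  rw [Pi.add_apply, ← (hasSum_volterra_iterate hB hg hz).tsum_eq, volterraSolution,
    (summable_iterate_volterra hB hg hz).tsum_eq_zero_add]
  simp only [Function.iterate_succ_apply', Function.iterate_zero_apply]

theorem le_volterraSolution (hB : IntervalIntegrable B volume 0 K) (hB0 : ∀ r ∈ Icc 0 K, 0 ≤ B r)
    (hg : ContinuousOn g (Icc 0 K)) (hg0 : ∀ r ∈ Icc 0 K, 0 ≤ g r) (hz : z ∈ Icc 0 K) :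
    g z ≤ volterraSolution B g z := by
  have hiter (n : ℕ) : ∀ r ∈ Icc 0 K, 0 ≤ (volterra B)^[n] g r := by
    induction n with
    | zero => exact hg0
    | succ n ih =>
      rw [Function.iterate_succ_apply']
      exact fun r hr => volterra_nonneg hB0 ih hr
  exact (summable_iterate_volterra hB hg hz).le_tsum 0 fun n _ => hiter n z hz

theorem monotoneOn_volterraSolution (hB : IntervalIntegrable B volume 0 K)
    (hB0 : ∀ r ∈ Icc 0 K, 0 ≤ B r) (hg : ContinuousOn g (Icc 0 K))
    (hg0 : ∀ r ∈ Icc 0 K, 0 ≤ g r) (hgm : MonotoneOn g (Icc 0 K)) :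
    MonotoneOn (volterraSolution B g) (Icc 0 K) :=
  (hgm.add (monotoneOn_volterra hB hB0 (continuousOn_volterraSolution hB hg) fun r hr =>
    (hg0 r hr).trans (le_volterraSolution hB hB0 hg hg0 hr))).congr
      (eqOn_volterraSolution hB hg).symm

end VolterraSolution

section Shooting

variable {B w : ℝ → ℝ} {K N z b : ℝ}

/-- The solution of `u'' = B u`, `u(0) = 1`, `u'(0) = 0`. -/
noncomputable def neumannSolution (B : ℝ → ℝ) : ℝ → ℝ :=
  volterraSolution B fun _ => 1

/-- The solution of `v'' = B v`, `v(0) = 0`, `v'(0) = 1`. -/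
noncomputable def dirichletSolution (B : ℝ → ℝ) : ℝ → ℝ :=
  volterraSolution B id

/-- The solution of `w'' = B w`, `w(0) = 1`, `w'(0) = b`. -/
noncomputable def shootingSolution (B : ℝ → ℝ) (b z : ℝ) : ℝ :=
  neumannSolution B z + b * dirichletSolution B z

/-- The initial slope for which the shooting solution vanishes at `N > 0`. -/
noncomputable def shootingSlope (B : ℝ → ℝ) (N : ℝ) : ℝ :=
  -neumannSolution B N / dirichletSolution B N

theorem continuousOn_neumannSolution (hB : IntervalIntegrable B volume 0 K) :
    ContinuousOn (neumannSolution B) (Icc 0 K) :=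
  continuousOn_volterraSolution hB continuousOn_const

theorem continuousOn_dirichletSolution (hB : IntervalIntegrable B volume 0 K) :
    ContinuousOn (dirichletSolution B) (Icc 0 K) :=
  continuousOn_volterraSolution hB continuousOn_id

theorem eqOn_neumannSolution (hB : IntervalIntegrable B volume 0 K) :
    EqOn (neumannSolution B) ((fun _ => 1) + volterra B (neumannSolution B)) (Icc 0 K) :=
  eqOn_volterraSolution hB continuousOn_const

theorem eqOn_dirichletSolution (hB : IntervalIntegrable B volume 0 K) :
    EqOn (dirichletSolution B) (id + volterra B (dirichletSolution B)) (Icc 0 K) :=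
  eqOn_volterraSolution hB continuousOn_id

theorem continuousOn_shootingSolution (hB : IntervalIntegrable B volume 0 K) (b : ℝ) :
    ContinuousOn (shootingSolution B b) (Icc 0 K) :=
  (continuousOn_neumannSolution hB).add
    (continuousOn_const.mul (continuousOn_dirichletSolution hB))

theorem eqOn_shootingSolution_add_volterra (hB : IntervalIntegrable B volume 0 K) (b : ℝ) :
    EqOn (shootingSolution B b) ((fun z => 1 + b * z) + volterra B (shootingSolution B b))
      (Icc 0 K) := by
  intro z hz
  have hV := volterra_linear_combination hB (continuousOn_neumannSolution hB)
    (continuousOn_dirichletSolution hB) 1 b hz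
  simp only [one_mul] at hV
  calc shootingSolution B b z
      = (1 + volterra B (neumannSolution B) z) + b * (z + volterra B (dirichletSolution B) z) := by
        rw [shootingSolution, eqOn_neumannSolution hB hz, eqOn_dirichletSolution hB hz]
        rfl
    _ = 1 + b * z
          + (volterra B (neumannSolution B) z + b * volterra B (dirichletSolution B) z) := by
        ring
    _ = 1 + b * z + volterra B (shootingSolution B b) z := congrArg (1 + b * z + ·) hV.symm

theorem eqOn_shootingSolution (hB : IntervalIntegrable B volume 0 K)
    (hw : ContinuousOn w (Icc 0 K))
    (h : EqOn w ((fun z => 1 + b * z) + volterra B w) (Icc 0 K)) :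
    EqOn w (shootingSolution B b) (Icc 0 K) :=
  eqOn_of_eqOn_add_volterra hB hw (continuousOn_shootingSolution hB b) h
    (eqOn_shootingSolution_add_volterra hB b)

theorem shootingSolution_zero (B : ℝ → ℝ) (b : ℝ) : shootingSolution B b 0 = 1 := by
  simpa using eqOn_shootingSolution_add_volterra (IntervalIntegrable.refl (f := B)) b
    (left_mem_Icc.2 le_rfl)

theorem dirichletSolution_zero (B : ℝ → ℝ) : dirichletSolution B 0 = 0 := by
  simpa using eqOn_dirichletSolution (IntervalIntegrable.refl (f := B)) (left_mem_Icc.2 le_rfl)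

theorem one_le_neumannSolution (hB : IntervalIntegrable B volume 0 z)
    (hB0 : ∀ r ∈ Icc 0 z, 0 ≤ B r) (hz : 0 ≤ z) : 1 ≤ neumannSolution B z :=
  le_volterraSolution hB hB0 continuousOn_const (fun _ _ => zero_le_one) (right_mem_Icc.2 hz)

theorem le_dirichletSolution (hB : IntervalIntegrable B volume 0 z)
    (hB0 : ∀ r ∈ Icc 0 z, 0 ≤ B r) (hz : 0 ≤ z) : z ≤ dirichletSolution B z :=
  le_volterraSolution hB hB0 continuousOn_id (fun _ hr => hr.1) (right_mem_Icc.2 hz)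

theorem monotoneOn_dirichletSolution (hB : IntervalIntegrable B volume 0 K)
    (hB0 : ∀ r ∈ Icc 0 K, 0 ≤ B r) : MonotoneOn (dirichletSolution B) (Icc 0 K) :=
  monotoneOn_volterraSolution hB hB0 continuousOn_id (fun _ hr => hr.1) monotoneOn_id

theorem shootingSolution_shootingSlope_self (h : dirichletSolution B N ≠ 0) :
    shootingSolution B (shootingSlope B N) N = 0 := by
  rw [shootingSolution, shootingSlope, div_mul_cancel₀ _ h, add_neg_cancel]

theorem volterra_reflect (B w : ℝ → ℝ) (N z : ℝ) :
    volterra (fun r => B (N - r)) w (N - z) = ∫ r in z..N, (r - z) * B r * w (N - r) := by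
  have := intervalIntegral.integral_comp_sub_left (a := 0) (b := N - z)
    (fun r => (r - z) * B r * w (N - r)) N
  simp only [sub_sub_cancel, sub_zero] at this
  rw [← this, volterra]
  congr 1 with r
  ring

theorem exists_affine_volterra_reflect (hB : IntervalIntegrable B volume 0 N)
    (hw : ContinuousOn (fun r => w (N - r)) (Icc 0 N)) :
    ∃ c d : ℝ, ∀ z ∈ Icc 0 N, volterra (fun r => B (N - r)) w (N - z) =
      c + d * z + volterra B (fun r => w (N - r)) z := by
  refine ⟨∫ r in (0 : ℝ)..N, B r * (r * w (N - r)), -∫ r in (0 : ℝ)..N, B r * w (N - r),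
    fun z hz => ?_⟩
  have h0 : (0 : ℝ) ∈ Icc 0 N := ⟨le_rfl, hz.1.trans hz.2⟩
  have hN : N ∈ Icc 0 N := ⟨h0.2, le_rfl⟩
  have hint {y : ℝ} (hy : y ∈ Icc 0 N) := intervalIntegrable_sub_mul_mul hB hw z h0 hy
  calc volterra (fun r => B (N - r)) w (N - z)
      = -∫ r in z..N, (z - r) * B r * w (N - r) := by
        rw [volterra_reflect, ← intervalIntegral.integral_neg]
        congr 1 with r
        ring
    _ = volterra B (fun r => w (N - r)) z - ∫ r in (0 : ℝ)..N, (z - r) * B r * w (N - r) := by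
        rw [← intervalIntegral.integral_interval_sub_left (hint hN) (hint hz), neg_sub, volterra]
    _ = _ := by
        rw [integral_sub_mul_mul hB hw z h0 hN]
        ring

/-- The solution of `w'' = B w`, `w(N) = 0`, `w'(N) = -1` on `[0, N]`, obtained by reflecting the
string. Solving backwards from `N` makes its monotonicity automatic. -/
noncomputable def backwardSolution (B : ℝ → ℝ) (N z : ℝ) : ℝ :=
  dirichletSolution (fun r => B (N - r)) (N - z)

theorem mapsTo_sub_left_Icc (N : ℝ) : MapsTo (fun r => N - r) (Icc 0 N) (Icc 0 N) := fun _ hr =>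
  ⟨sub_nonneg.2 hr.2, sub_le_self N hr.1⟩

theorem intervalIntegrable_reflect (hB : IntervalIntegrable B volume 0 N) :
    IntervalIntegrable (fun r => B (N - r)) volume 0 N := by
  simpa using (hB.comp_sub_left N).symm

theorem continuousOn_backwardSolution (hB : IntervalIntegrable B volume 0 N) :
    ContinuousOn (backwardSolution B N) (Icc 0 N) :=
  (continuousOn_dirichletSolution (intervalIntegrable_reflect hB)).comp (by fun_prop)
    (mapsTo_sub_left_Icc N)

theorem antitoneOn_backwardSolution (hB : IntervalIntegrable B volume 0 N)
    (hB0 : ∀ r ∈ Icc 0 N, 0 ≤ B r) : AntitoneOn (backwardSolution B N) (Icc 0 N) :=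
  fun _ hx _ hy hxy =>
    monotoneOn_dirichletSolution (intervalIntegrable_reflect hB)
      (fun _ hr => hB0 _ (mapsTo_sub_left_Icc N hr)) (mapsTo_sub_left_Icc N hy)
      (mapsTo_sub_left_Icc N hx) (sub_le_sub_left hxy N)

theorem backwardSolution_self (B : ℝ → ℝ) (N : ℝ) : backwardSolution B N N = 0 := by
  rw [backwardSolution, sub_self]
  exact dirichletSolution_zero _

theorem backwardSolution_zero_pos (hN : 0 < N) (hB : IntervalIntegrable B volume 0 N)
    (hB0 : ∀ r ∈ Icc 0 N, 0 ≤ B r) : 0 < backwardSolution B N 0 := by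
  rw [backwardSolution, sub_zero]
  exact hN.trans_le (le_dirichletSolution (intervalIntegrable_reflect hB)
    (fun _ hr => hB0 _ (mapsTo_sub_left_Icc N hr)) hN.le)

theorem exists_backwardSolution_eq (hN : 0 ≤ N) (hB : IntervalIntegrable B volume 0 N) :
    ∃ d : ℝ, ∀ z ∈ Icc 0 N, backwardSolution B N z =
      backwardSolution B N 0 + d * z + volterra B (backwardSolution B N) z := by
  obtain ⟨c, d, hcd⟩ : ∃ c d : ℝ, ∀ z ∈ Icc 0 N, volterra (fun r => B (N - r))
      (dirichletSolution fun r => B (N - r)) (N - z) =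
        c + d * z + volterra B (backwardSolution B N) z :=
    exists_affine_volterra_reflect hB (continuousOn_backwardSolution hB)
  have heq : ∀ z ∈ Icc 0 N, backwardSolution B N z =
      N + c + (d - 1) * z + volterra B (backwardSolution B N) z := fun z hz => by
    have hv := eqOn_dirichletSolution (intervalIntegrable_reflect hB) (mapsTo_sub_left_Icc N hz)
    rw [Pi.add_apply, id, hcd z hz] at hv
    rw [backwardSolution, hv]
    ring
  have hzero : backwardSolution B N 0 = N + c := by simpa using heq 0 ⟨le_rfl, hN⟩
  exact ⟨d - 1, hzero ▸ heq⟩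

theorem antitoneOn_shootingSolution_shootingSlope (hN : 0 < N)
    (hB : IntervalIntegrable B volume 0 N) (hB0 : ∀ r ∈ Icc 0 N, 0 ≤ B r) :
    AntitoneOn (shootingSolution B (shootingSlope B N)) (Icc 0 N) := by
  set W := backwardSolution B N
  have hW0 : 0 < W 0 := backwardSolution_zero_pos hN hB hB0
  obtain ⟨d, hd⟩ : ∃ d : ℝ, ∀ z ∈ Icc 0 N, W z = W 0 + d * z + volterra B W z :=
    exists_backwardSolution_eq hN.le hB
  have hnormalized : EqOn (fun z => (W 0)⁻¹ * W z) (shootingSolution B ((W 0)⁻¹ * d))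
      (Icc 0 N) := by
    refine eqOn_shootingSolution hB (continuousOn_const.mul (continuousOn_backwardSolution hB))
      fun z hz => ?_
    simp only [Pi.add_apply, volterra_const_mul_right]
    rw [hd z hz]
    field_simp
  have hslope : (W 0)⁻¹ * d = shootingSlope B N := by
    have hvN : 0 < dirichletSolution B N := hN.trans_le (le_dirichletSolution hB hB0 hN.le)
    have hzero : shootingSolution B ((W 0)⁻¹ * d) N = 0 := by
      rw [← hnormalized ⟨hN.le, le_rfl⟩]
      simp only [W, backwardSolution_self, mul_zero]
    rw [shootingSolution] at hzero
    rw [shootingSlope, eq_div_iff hvN.ne']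
    linarith
  have hanti : AntitoneOn (fun z => (W 0)⁻¹ * W z) (Icc 0 N) := fun x hx y hy hxy =>
    mul_le_mul_of_nonneg_left (antitoneOn_backwardSolution hB hB0 hx hy hxy) (by positivity)
  exact hslope ▸ hanti.congr hnormalized

theorem shootingSolution_shootingSlope_nonneg (hN : 0 < N)
    (hB : IntervalIntegrable B volume 0 N) (hB0 : ∀ r ∈ Icc 0 N, 0 ≤ B r) (hz : z ∈ Icc 0 N) :
    0 ≤ shootingSolution B (shootingSlope B N) z := by
  have hvN : 0 < dirichletSolution B N := hN.trans_le (le_dirichletSolution hB hB0 hN.le)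
  rw [← shootingSolution_shootingSlope_self hvN.ne']
  exact antitoneOn_shootingSolution_shootingSlope hN hB hB0 hz ⟨hN.le, le_rfl⟩ hz.2

theorem shootingSlope_nonpos (hB : IntervalIntegrable B volume 0 N)
    (hB0 : ∀ r ∈ Icc 0 N, 0 ≤ B r) (hN : 0 ≤ N) : shootingSlope B N ≤ 0 :=
  div_nonpos_of_nonpos_of_nonneg
    (neg_nonpos.2 (zero_le_one.trans (one_le_neumannSolution hB hB0 hN)))
    (hN.trans (le_dirichletSolution hB hB0 hN))

end Shooting

section HalfLine

variable {B : ℝ → ℝ} (hB : ∀ K, 0 < K → IntervalIntegrable B volume 0 K)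
  (hB0 : ∀ r, 0 ≤ r → 0 ≤ B r)

include hB in
theorem continuousOn_Ici_shootingSolution (b : ℝ) :
    ContinuousOn (shootingSolution B b) (Ici 0) := by
  intro z hz
  have hz1 : z < z + 1 := lt_add_one z
  refine (continuousOn_shootingSolution (hB (z + 1) (lt_of_le_of_lt hz hz1)) b z
    ⟨hz, hz1.le⟩).mono_of_mem_nhdsWithin ?_
  rw [← Ici_inter_Iic]
  exact inter_mem self_mem_nhdsWithin (mem_nhdsWithin_of_mem_nhds (Iic_mem_nhds hz1))

include hB hB0

theorem monotoneOn_shootingSlope : MonotoneOn (shootingSlope B) (Ioi 0) := by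
  intro x hx y hy hxy
  have hv : 0 < dirichletSolution B x :=
    hx.trans_le (le_dirichletSolution (hB x hx) (fun r hr => hB0 r hr.1) (le_of_lt hx))
  have hnonneg : 0 ≤ neumannSolution B x + shootingSlope B y * dirichletSolution B x :=
    shootingSolution_shootingSlope_nonneg hy (hB y hy) (fun r hr => hB0 r hr.1)
      ⟨le_of_lt hx, hxy⟩
  rw [shootingSlope, div_le_iff₀ hv]
  linarith

theorem exists_tendsto_shootingSlope :
    ∃ b, Tendsto (fun n : ℕ => shootingSlope B (n + 1)) atTop (𝓝 b) := by
  have hpos (n : ℕ) : (0 : ℝ) < n + 1 := n.cast_add_one_pos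
  refine ⟨_, tendsto_atTop_ciSup (fun m n hmn => ?_) ⟨0, ?_⟩⟩
  · exact monotoneOn_shootingSlope hB hB0 (hpos m) (hpos n) (by gcongr)
  · rintro _ ⟨n, rfl⟩
    exact shootingSlope_nonpos (hB _ (hpos n)) (fun r hr => hB0 r hr.1) (hpos n).le

theorem exists_antitoneOn_shootingSolution_nonneg :
    ∃ b, AntitoneOn (shootingSolution B b) (Ici 0) ∧ ∀ z, 0 ≤ z → 0 ≤ shootingSolution B b z := by
  obtain ⟨b, hb⟩ := exists_tendsto_shootingSlope hB hB0
  have hpos (n : ℕ) : (0 : ℝ) < n + 1 := n.cast_add_one_pos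
  have hlim (z : ℝ) : Tendsto (fun n : ℕ => shootingSolution B (shootingSlope B (n + 1)) z) atTop
      (𝓝 (shootingSolution B b z)) := (hb.mul_const _).const_add _
  have hlarge (z : ℝ) : ∀ᶠ n : ℕ in atTop, z ≤ n + 1 :=
    (tendsto_natCast_atTop_atTop.atTop_add tendsto_const_nhds).eventually_ge_atTop z
  refine ⟨b, fun x hx y hy hxy => ?_, fun z hz => ?_⟩
  · refine le_of_tendsto_of_tendsto (hlim y) (hlim x) ((hlarge y).mono fun n hn => ?_)
    exact antitoneOn_shootingSolution_shootingSlope (hpos n) (hB _ (hpos n))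
      (fun r hr => hB0 r hr.1) ⟨hx, hxy.trans hn⟩ ⟨hy, hn⟩ hxy
  · refine ge_of_tendsto (hlim z) ((hlarge z).mono fun n hn => ?_)
    exact shootingSolution_shootingSlope_nonneg (hpos n) (hB _ (hpos n)) (fun r hr => hB0 r hr.1)
      ⟨hz, hn⟩

theorem slope_eq_of_shootingSolution_mem_Icc {b₁ b₂ : ℝ}
    (h₁ : ∀ z, 0 ≤ z → shootingSolution B b₁ z ∈ Icc 0 1)
    (h₂ : ∀ z, 0 ≤ z → shootingSolution B b₂ z ∈ Icc 0 1) : b₁ = b₂ := by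
  by_contra hne
  have hd : 0 < |b₁ - b₂| := abs_pos.2 (sub_ne_zero.2 hne)
  set z := 2 / |b₁ - b₂|
  have hz : 0 < z := by positivity
  have hv : z ≤ dirichletSolution B z :=
    le_dirichletSolution (hB z hz) (fun r hr => hB0 r hr.1) hz.le
  have hdiff : shootingSolution B b₁ z - shootingSolution B b₂ z
      = (b₁ - b₂) * dirichletSolution B z := by
    simp only [shootingSolution]
    ring
  have hcontra : (2 : ℝ) ≤ 1 := calc
    2 = |b₁ - b₂| * z := by rw [mul_div_cancel₀ _ hd.ne']
    _ ≤ |b₁ - b₂| * dirichletSolution B z := by gcongr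
    _ = |shootingSolution B b₁ z - shootingSolution B b₂ z| := by
        rw [hdiff, abs_mul, abs_of_pos (hz.trans_le hv)]
    _ ≤ 1 := by
        simpa using abs_sub_le_of_le_of_le (h₁ z hz.le).1 (h₁ z hz.le).2
          (h₂ z hz.le).1 (h₂ z hz.le).2
  norm_num at hcontra

end HalfLine

namespace IsKreinSolution

variable {A R R' : ℝ → ℝ} {lam : ℝ}

theorem mem_Icc (h : IsKreinSolution A lam R) {z : ℝ} (hz : 0 ≤ z) : R z ∈ Icc 0 1 := by
  obtain ⟨-, hanti, hR0, hnonneg, -⟩ := h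
  exact ⟨hnonneg z hz, hR0 ▸ hanti self_mem_Ici hz hz⟩

theorem exists_eqOn_shootingSolution (h : IsKreinSolution A lam R)
    (hB : ∀ K, 0 < K → IntervalIntegrable (fun r => lam * A r) volume 0 K) :
    ∃ b, EqOn R (shootingSolution (fun r => lam * A r) b) (Ici 0) := by
  obtain ⟨hcont, -, -, -, b, hb⟩ := h
  refine ⟨b, fun z hz => ?_⟩
  have hz1 : z ≤ z + 1 := by linarith
  refine eqOn_shootingSolution (hB (z + 1) (by linarith [mem_Ici.1 hz]))
    (hcont.mono Icc_subset_Ici_self) (fun x hx => ?_) ⟨hz, hz1⟩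
  rw [Pi.add_apply, volterra_const_mul_left]
  exact hb x hx.1

theorem eqOn (h : IsKreinSolution A lam R) (h' : IsKreinSolution A lam R')
    (hB : ∀ K, 0 < K → IntervalIntegrable (fun r => lam * A r) volume 0 K)
    (hB0 : ∀ r, 0 ≤ r → 0 ≤ lam * A r) : EqOn R R' (Ici 0) := by
  obtain ⟨b, hb⟩ := h.exists_eqOn_shootingSolution hB
  obtain ⟨b', hb'⟩ := h'.exists_eqOn_shootingSolution hB
  have hbb' : b = b' := slope_eq_of_shootingSolution_mem_Icc hB hB0
    (fun z hz => hb hz ▸ h.mem_Icc hz) (fun z hz => hb' hz ▸ h'.mem_Icc hz)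
  exact hb.trans (hbb' ▸ hb'.symm)

end IsKreinSolution

theorem exists_isKreinSolution {A : ℝ → ℝ} {lam : ℝ}
    (hB : ∀ K, 0 < K → IntervalIntegrable (fun r => lam * A r) volume 0 K)
    (hB0 : ∀ r, 0 ≤ r → 0 ≤ lam * A r) : ∃ R, IsKreinSolution A lam R := by
  obtain ⟨b, hanti, hnonneg⟩ := exists_antitoneOn_shootingSolution_nonneg hB hB0
  refine ⟨shootingSolution (fun r => lam * A r) b, continuousOn_Ici_shootingSolution hB b, hanti,
    shootingSolution_zero _ b, hnonneg, b, fun z hz => ?_⟩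
  have heq := eqOn_shootingSolution_add_volterra (hB (z + 1) (by linarith)) b ⟨hz, by linarith⟩
  rwa [Pi.add_apply, volterra_const_mul_left] at heq

theorem krein_existence_uniqueness (A : ℝ → ℝ) (hA_meas : Measurable A)
    (hA_nonneg : ∀ r : ℝ, 0 ≤ r → 0 ≤ A r)
    (hA_loc : ∀ K : ℝ, 0 < K → IntegrableOn A (Set.Icc 0 K))
    (lam : ℝ) (hlam : 0 ≤ lam) :
    ∃ R : ℝ → ℝ, IsKreinSolution A lam R ∧
      ∀ R' : ℝ → ℝ, IsKreinSolution A lam R' → Set.EqOn R' R (Set.Ici 0) := by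
  have hB : ∀ K, 0 < K → IntervalIntegrable (fun r => lam * A r) volume 0 K := fun K hK =>
    ((intervalIntegrable_iff_integrableOn_Icc_of_le hK.le).2 (hA_loc K hK)).const_mul lam
  have hB0 : ∀ r, 0 ≤ r → 0 ≤ lam * A r := fun r hr => mul_nonneg hlam (hA_nonneg r hr)
  obtain ⟨R, hR⟩ := exists_isKreinSolution hB hB0
  exact ⟨R, hR, fun R' hR' => hR'.eqOn hR hB hB0⟩
end
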